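/- Let d ≥ 1, let J_d(u) = ∫_{‖x‖≤1} e^{−i⟨u,x⟩} dx for u ∈ ℝ^d, and let S be the measure on ℝ^d with density u ↦ J_d(u)² with respect to Lebesgue measure. Let ρ > 2. Then for every bounded measurable f : ℝ^d → ℂ with support contained in the closed ball B(0, ρ−2) which is not Lebesgue-almost everywhere zero, and every bounded measurable compactly supported h : ℝ^d → ℂ with support contained in ℝ^d ∖ B(0,ρ), one has ∫_{ℝ^d} f̂(u)·conj(ĥ(u))·J_d(u)² du = 0, and hence ∫_{ℝ^d} |f̂(u) − ĥ(u)|² J_d(u)² du ≥ ∫_{ℝ^d} |f̂(u)|² J_d(u)² du > 0. In particular, S does not induce linear maximal rigidity on B(0,ρ). -/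

import Mathlib

open MeasureTheory Complex
open scoped RealInnerProductSpace

noncomputable section

abbrev Ed (d : ℕ) := EuclideanSpace ℝ (Fin d)

/-- Fourier transform `f̂(u) = ∫ e^{-i⟨u,x⟩} f(x) dx`. -/
def FT {d : ℕ} (f : Ed d → ℂ) (u : Ed d) : ℂ :=
  ∫ x : Ed d, Complex.exp (-Complex.I * (⟪u, x⟫ : ℝ)) * f x

/-- `f` is bounded, measurable, with bounded support contained in `A`. -/
def IsCBS {d : ℕ} (A : Set (Ed d)) (f : Ed d → ℂ) : Prop :=
  Measurable f ∧ (∃ C : ℝ, ∀ x, ‖f x‖ ≤ C) ∧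
    Bornology.IsBounded (Function.support f) ∧ Function.support f ⊆ A

/-- `S` induces linear maximal rigidity on `A`. -/
def LMR {d : ℕ} (S : Measure (Ed d)) (A : Set (Ed d)) : Prop :=
  ∀ f : Ed d → ℂ, IsCBS A f → ∀ ε : ℝ, 0 < ε →
    ∃ h : Ed d → ℂ, IsCBS Aᶜ h ∧ (∫ u, ‖FT f u - FT h u‖ ^ 2 ∂S) < ε

/-- `J_d(u) = ∫_{‖x‖≤1} e^{-i⟨u,x⟩} dx`, the Fourier transform of the indicator of the
closed unit ball; the integral is real-valued, so we record its real part. -/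
def Jd (d : ℕ) (u : Ed d) : ℝ :=
  (∫ x in Metric.closedBall (0 : Ed d) 1, Complex.exp (-Complex.I * (⟪u, x⟫ : ℝ))).re

/-!
Multiplying `f̂` by the Fourier transform of a kernel `k` amounts to convolving `f` with `k`, so
by Plancherel the pairings of `f̂` and `ĥ` in `L²(|k̂|² · Leb)` are `(2π)^d` times those of `k ∗ f`
and `k ∗ h` in `L²(ℝᵈ)`. Convolution enlarges supports by at most the support of `k`; for `k` the
indicator of the unit ball, `k ∗ f` and `k ∗ h` therefore have disjoint supports as soon as those
of `f` and `h` are more than `2` apart, which gives the orthogonality and the lower bound. The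
bound is positive because `f̂` is real-analytic along lines, `f` having bounded support: if `f̂ k̂`
vanished, `f̂` would vanish near a point where `k̂ ≠ 0`, hence everywhere.
-/

open Bornology ContinuousLinearMap Function
open scoped Convolution FourierTransform Pointwise SchwartzMap Topology

section FourierTransform

variable {V E : Type*} [NormedAddCommGroup V] [InnerProductSpace ℝ V] [FiniteDimensional ℝ V]
  [MeasurableSpace V] [BorelSpace V] [NormedAddCommGroup E]

section Banach

variable [NormedSpace ℂ E] {f : V → E}

theorem continuous_fourier (hf : Integrable f) : Continuous (𝓕 f) :=
  VectorFourier.fourierIntegral_continuous Real.continuous_fourierChar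
    (innerSL ℝ).continuous₂ hf

theorem differentiable_integral_cexp_mul_smul {α : Type*} [MeasurableSpace α] {μ : Measure α}
    {g : α → ℂ} {f : α → E} {C : ℝ} (hg : AEStronglyMeasurable g μ)
    (hgC : ∀ᵐ x ∂μ, ‖g x‖ ≤ C) (hf : Integrable f μ) :
    Differentiable ℂ fun z : ℂ => ∫ x, cexp (z * g x) • f x ∂μ := by
  have h_exp_meas (z : ℂ) : AEStronglyMeasurable (fun x => cexp (z * g x)) μ :=
    Complex.continuous_exp.comp_aestronglyMeasurable (hg.const_mul z)
  have h_exp_le {z : ℂ} {r : ℝ} (hz : ‖z‖ ≤ r) {x : α} (hx : ‖g x‖ ≤ C) :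
      ‖cexp (z * g x)‖ ≤ Real.exp (r * C) := by
    refine (norm_exp_le_exp_norm _).trans (Real.exp_le_exp.2 ?_)
    rw [norm_mul]
    exact mul_le_mul hz hx (norm_nonneg _) ((norm_nonneg _).trans hz)
  intro z₀
  have h_deriv := hasDerivAt_integral_of_dominated_loc_of_deriv_le
    (F := fun z x => cexp (z * g x) • f x) (F' := fun z x => (cexp (z * g x) * g x) • f x)
    (bound := fun x => Real.exp ((‖z₀‖ + 1) * C) * C * ‖f x‖) (μ := μ)
    (Metric.closedBall_mem_nhds z₀ one_pos)
    (.of_forall fun z => (h_exp_meas z).smul hf.1)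
    (hf.bdd_smul _ (h_exp_meas z₀) (hgC.mono fun x hx => h_exp_le le_rfl hx))
    (((h_exp_meas z₀).mul hg).smul hf.1)
    (hgC.mono fun x hx z hz => ?_) (hf.norm.const_mul _)
    (.of_forall fun x z _ => ?_)
  · exact h_deriv.2.differentiableAt
  · rw [norm_smul, norm_mul]
    have hz' : ‖z‖ ≤ ‖z₀‖ + 1 := norm_le_of_mem_closedBall hz
    gcongr
    exact h_exp_le hz' hx
  · simpa using (((hasDerivAt_id z).mul_const (g x)).cexp).smul_const (f x)

variable [CompleteSpace E]

theorem integral_schwartz_fourier_smul (φ : 𝓢(V, ℂ)) (hf : Integrable f) :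
    ∫ x, 𝓕 φ x • f x = ∫ x, φ x • 𝓕 f x := by
  have h := VectorFourier.integral_fourierIntegral_smul_eq_flip (L := innerₗ V)
    Real.continuous_fourierChar (innerSL ℝ).continuous₂ (φ.integrable (μ := volume)) hf
  rw [flip_innerₗ] at h
  exact h

theorem ae_eq_of_integral_schwartz_smul_eq {f g : V → E} (hf : LocallyIntegrable f)
    (hg : LocallyIntegrable g) (h : ∀ φ : 𝓢(V, ℂ), ∫ x, φ x • f x = ∫ x, φ x • g x) :
    f =ᵐ[volume] g := by
  refine ae_eq_of_integral_contDiff_smul_eq hf hg fun φ hφ hφc => ?_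
  have hφc' : HasCompactSupport fun x => (φ x : ℂ) := hφc.comp_left Complex.ofReal_zero
  exact h (hφc'.toSchwartzMap (Complex.ofRealCLM.contDiff.comp hφ))

theorem ae_eq_zero_of_fourier_eq_zero (hf : Integrable f) (h : 𝓕 f = 0) :
    f =ᵐ[volume] 0 := by
  refine ae_eq_of_integral_schwartz_smul_eq hf.locallyIntegrable
    (integrable_zero V E volume).locallyIntegrable fun φ => ?_
  have hφ := integral_schwartz_fourier_smul (𝓕⁻ φ) hf
  simpa [h] using hφ

theorem analyticOnNhd_fourier_line (hf : Integrable f) (hfs : IsBounded (support f)) (w v : V) :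
    AnalyticOnNhd ℝ (fun t : ℝ => 𝓕 f (w + t • v)) Set.univ := by
  obtain ⟨R, hR⟩ := hfs.subset_closedBall 0
  let G : ℂ → E := fun z => ∫ x in Metric.closedBall 0 R,
    cexp (z * (-2 * Real.pi * ⟪x, v⟫ * I)) • 𝐞 (-⟪x, w⟫) • f x
  have hG : Differentiable ℂ G := by
    refine differentiable_integral_cexp_mul_smul (C := 2 * Real.pi * (R * ‖v‖))
      (by fun_prop) ?_ ((Real.fourierIntegral_convergent_iff w).2 hf).integrableOn
    filter_upwards [ae_restrict_mem measurableSet_closedBall] with x hx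
    have hxv : |⟪x, v⟫| ≤ R * ‖v‖ :=
      (abs_real_inner_le_norm x v).trans (by gcongr; simpa using hx)
    simpa [abs_of_pos Real.pi_pos, Real.pi_pos] using hxv
  have hG_eq (t : ℝ) : 𝓕 f (w + t • v) = G t := by
    rw [Real.fourier_eq, ← setIntegral_eq_integral_of_forall_compl_eq_zero
      fun x (hx : x ∉ Metric.closedBall 0 R) => by simp [notMem_support.1 fun h => hx (hR h)]]
    refine integral_congr_ae (.of_forall fun x => ?_)
    simp only [inner_add_right, inner_smul_right, neg_add_rev, AddChar.map_add_eq_mul, mul_smul]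
    rw [Circle.smul_def, Real.fourierChar_apply]
    congr 2
    push_cast
    ring
  simp_rw [hG_eq]
  exact fun t _ => (hG.analyticAt t).restrictScalars.comp (ofRealCLM.analyticAt t)

theorem fourier_eq_zero_of_eventuallyEq (hf : Integrable f) (hfs : IsBounded (support f)) {w : V}
    (h : 𝓕 f =ᶠ[𝓝 w] 0) : 𝓕 f = 0 := by
  funext u
  have h_line : Filter.Tendsto (fun t : ℝ => w + t • (u - w)) (𝓝 0) (𝓝 w) :=
    Continuous.tendsto' (by fun_prop) _ _ (by simp)
  have h_zero := (analyticOnNhd_fourier_line hf hfs w (u - w)).eq_of_eventuallyEq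
    (g := fun _ => 0) analyticOnNhd_const (h_line.eventually h)
  simpa using congrFun h_zero 1

end Banach

theorem ae_eq_zero_of_convolution_ae_eq_zero {k f : V → ℂ} (hf : Integrable f)
    (hfs : IsBounded (support f)) (hk : Integrable k) (hk₀ : ¬ k =ᵐ[volume] 0)
    (h : k ⋆[mul ℂ ℂ] f =ᵐ[volume] 0) : f =ᵐ[volume] 0 := by
  have h_prod (u : V) : 𝓕 k u * 𝓕 f u = 0 := by
    rw [← Real.fourier_mul_convolution_eq hk hf, Real.fourier_congr_ae h, Real.fourier_eq]
    simp
  obtain ⟨w, hw⟩ : ∃ w, 𝓕 k w ≠ 0 := by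
    by_contra! hk_zero
    exact hk₀ (ae_eq_zero_of_fourier_eq_zero hk (funext hk_zero))
  refine ae_eq_zero_of_fourier_eq_zero hf (fourier_eq_zero_of_eventuallyEq hf hfs (w := w) ?_)
  filter_upwards [(continuous_fourier hk).continuousAt.eventually_ne hw] with u hu
  exact (mul_eq_zero.1 (h_prod u)).resolve_left hu

section Plancherel

variable [InnerProductSpace ℂ E] [CompleteSpace E] {f g : V → E}

theorem fourier_ae_eq_fourier_toLp (hf : Integrable f) (hf₂ : MemLp f 2) :
    𝓕 f =ᵐ[volume] (𝓕 (hf₂.toLp f) : Lp E 2 volume) := by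
  refine ae_eq_of_integral_schwartz_smul_eq (continuous_fourier hf).locallyIntegrable
    ((Lp.memLp _).locallyIntegrable one_le_two) fun φ => ?_
  calc ∫ x, φ x • 𝓕 f x
      = ∫ x, 𝓕 φ x • f x := (integral_schwartz_fourier_smul φ hf).symm
    _ = ∫ x, 𝓕 φ x • hf₂.toLp f x :=
        integral_congr_ae (hf₂.coeFn_toLp.mono fun x hx => by simp only [hx])
    _ = ∫ x, φ x • (𝓕 (hf₂.toLp f) : Lp E 2 volume) x := by
        rw [← Lp.toTemperedDistribution_apply, ← TemperedDistribution.fourier_apply,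
          Lp.fourier_toTemperedDistribution_eq, Lp.toTemperedDistribution_apply]

theorem integral_inner_fourier_fourier (hf : Integrable f) (hf₂ : MemLp f 2) (hg : Integrable g)
    (hg₂ : MemLp g 2) : ∫ u, inner ℂ (𝓕 f u) (𝓕 g u) = ∫ x, inner ℂ (f x) (g x) := by
  calc ∫ u, inner ℂ (𝓕 f u) (𝓕 g u)
      = ∫ u, inner ℂ ((𝓕 (hf₂.toLp f) : Lp E 2 volume) u)
          ((𝓕 (hg₂.toLp g) : Lp E 2 volume) u) := by
        refine integral_congr_ae ?_
        filter_upwards [fourier_ae_eq_fourier_toLp hf hf₂, fourier_ae_eq_fourier_toLp hg hg₂]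
          with u hfu hgu
        rw [hfu, hgu]
    _ = ∫ x, inner ℂ (hf₂.toLp f x) (hg₂.toLp g x) := by
        rw [← L2.inner_def, Lp.inner_fourier_eq, L2.inner_def]
    _ = ∫ x, inner ℂ (f x) (g x) := by
        refine integral_congr_ae ?_
        filter_upwards [hf₂.coeFn_toLp, hg₂.coeFn_toLp] with x hfx hgx
        rw [hfx, hgx]

end Plancherel

end FourierTransform

section Integrability

variable {α E : Type*} [MeasurableSpace α] {μ : Measure α} [NormedAddCommGroup E] {f : α → E}

theorem memLp_two_of_integrable_of_bound (hf : Integrable f μ) {C : ℝ}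
    (hC : ∀ᵐ x ∂μ, ‖f x‖ ≤ C) : MemLp f 2 μ := by
  rw [memLp_two_iff_integrable_sq_norm hf.1]
  simp_rw [sq]
  exact hf.norm.bdd_mul hf.1.norm (hC.mono fun x hx => by rwa [norm_norm])

theorem integral_norm_sq_pos (hf : MemLp f 2 μ) (hf₀ : ¬ f =ᵐ[μ] 0) :
    0 < ∫ x, ‖f x‖ ^ 2 ∂μ := by
  refine (integral_nonneg fun x => sq_nonneg ‖f x‖).lt_of_ne' fun h => hf₀ ?_
  rw [integral_eq_zero_iff_of_nonneg (fun x => sq_nonneg ‖f x‖)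
    ((memLp_two_iff_integrable_sq_norm hf.1).1 hf)] at h
  filter_upwards [h] with x hx
  simpa using hx

end Integrability

section Convolution

variable {𝕜 G E E' F : Type*} [NontriviallyNormedField 𝕜] [NormedAddCommGroup E]
  [NormedSpace 𝕜 E] [NormedAddCommGroup E'] [NormedSpace 𝕜 E'] [NormedAddCommGroup F]
  [NormedSpace 𝕜 F] [NormedSpace ℝ F] [AddGroup G] [MeasurableSpace G] {μ : Measure G}
  {k : G → E} {f : G → E'} {C : ℝ}

theorem norm_convolution_le_of_bound (L : E →L[𝕜] E' →L[𝕜] F) (hk : Integrable k μ)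
    (hfC : ∀ x, ‖f x‖ ≤ C) (x : G) :
    ‖(k ⋆[L, μ] f) x‖ ≤ ∫ y, ‖L‖ * ‖k y‖ * C ∂μ :=
  norm_integral_le_of_norm_le ((hk.norm.const_mul _).mul_const C) <| .of_forall fun y =>
    (L.le_opNorm₂ _ _).trans (mul_le_mul_of_nonneg_left (hfC _) (by positivity))

theorem memLp_two_convolution_of_bound [MeasurableAdd₂ G] [MeasurableNeg G] [SFinite μ]
    [μ.IsAddRightInvariant] (L : E →L[𝕜] E' →L[𝕜] F) (hk : Integrable k μ)
    (hf : Integrable f μ) (hfC : ∀ x, ‖f x‖ ≤ C) : MemLp (k ⋆[L, μ] f) 2 μ :=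
  memLp_two_of_integrable_of_bound (hk.integrable_convolution L hf)
    (.of_forall (norm_convolution_le_of_bound L hk hfC))

end Convolution

theorem norm_le_norm_sub_of_disjoint_support {α E : Type*} [SeminormedAddCommGroup E] {f g : α → E}
    (h : Disjoint (support f) (support g)) (x : α) : ‖f x‖ ≤ ‖f x - g x‖ := by
  by_cases hfx : f x = 0
  · simp [hfx]
  · have hgx : g x = 0 := notMem_support.1 (h.notMem_of_mem_left hfx)
    rw [hgx, sub_zero]

theorem disjoint_add_compl_add_of_add_sub_subset {G : Type*} [AddCommGroup G] {A B K : Set G}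
    (h : K + (B - B) ⊆ A) : Disjoint (B + K) (B + Aᶜ) := by
  rw [Set.disjoint_left]
  rintro _ ⟨b, hb, x, hx, rfl⟩ ⟨c, hc, y, hy, hyc⟩
  refine hy (h ⟨x, hx, b - c, Set.sub_mem_sub hb hc, ?_⟩)
  rw [eq_sub_of_add_eq' hyc]
  exact (add_comm x _).trans (sub_add_eq_add_sub b c x)

section FT

variable {d : ℕ} {f g : Ed d → ℂ}

theorem FT_eq_fourier (f : Ed d → ℂ) (u : Ed d) : FT f u = 𝓕 f ((2 * Real.pi)⁻¹ • u) := by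
  rw [Real.fourier_eq', FT]
  refine integral_congr_ae (.of_forall fun x => ?_)
  simp only [inner_smul_right, real_inner_comm, smul_eq_mul]
  congr 2
  push_cast
  field_simp

theorem continuous_FT (hf : Integrable f) : Continuous (FT f) := by
  rw [funext (FT_eq_fourier f)]
  exact (continuous_fourier hf).comp (continuous_const_smul _)

theorem FT_sub (hf : Integrable f) (hg : Integrable g) (u : Ed d) :
    FT (f - g) u = FT f u - FT g u := by
  simp only [FT_eq_fourier, Real.fourier_eq, Pi.sub_apply, smul_sub]
  exact integral_sub ((Real.fourierIntegral_convergent_iff _).2 hf)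
    ((Real.fourierIntegral_convergent_iff _).2 hg)

theorem FT_convolution (hf : Integrable f) (hg : Integrable g) (u : Ed d) :
    FT (f ⋆[mul ℂ ℂ] g) u = FT f u * FT g u := by
  simp only [FT_eq_fourier, Real.fourier_mul_convolution_eq hf hg]

theorem conj_FT (f : Ed d → ℂ) (u : Ed d) :
    starRingEnd ℂ (FT f u) = FT (fun x => starRingEnd ℂ (f (-x))) u := by
  unfold FT
  rw [← integral_conj, ← integral_neg_eq_self]
  simp [← exp_conj]

theorem integral_FT_mul_conj_FT (hf : Integrable f) (hf₂ : MemLp f 2) (hg : Integrable g)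
    (hg₂ : MemLp g 2) :
    ∫ u, FT f u * starRingEnd ℂ (FT g u) =
      (2 * Real.pi) ^ d • ∫ x, f x * starRingEnd ℂ (g x) := by
  simp_rw [FT_eq_fourier]
  rw [Measure.integral_comp_inv_smul_of_nonneg volume
    (fun u => 𝓕 f u * starRingEnd ℂ (𝓕 g u)) (by positivity), finrank_euclideanSpace_fin]
  exact congrArg _ (integral_inner_fourier_fourier hg hg₂ hf hf₂)

theorem integral_norm_FT_sq (hf : Integrable f) (hf₂ : MemLp f 2) :
    ∫ u, ‖FT f u‖ ^ 2 = (2 * Real.pi) ^ d * ∫ x, ‖f x‖ ^ 2 := by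
  have h := integral_FT_mul_conj_FT hf hf₂ hf hf₂
  simp_rw [mul_conj', ← ofReal_pow, integral_complex_ofReal, real_smul] at h
  exact_mod_cast h

end FT

theorem IsCBS.integrable {d : ℕ} {A : Set (Ed d)} {f : Ed d → ℂ} (hf : IsCBS A f) :
    Integrable f := by
  obtain ⟨hf_meas, ⟨C, hC⟩, hf_bdd, -⟩ := hf
  obtain ⟨R, hR⟩ := hf_bdd.subset_closedBall 0
  rw [← integrableOn_iff_integrable_of_support_subset hR]
  exact Measure.integrableOn_of_bounded measure_closedBall_lt_top.ne
    hf_meas.aestronglyMeasurable (.of_forall hC)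

theorem IsCBS.mono {d : ℕ} {A B : Set (Ed d)} {f : Ed d → ℂ} (hf : IsCBS A f) (h : A ⊆ B) :
    IsCBS B f :=
  ⟨hf.1, hf.2.1, hf.2.2.1, hf.2.2.2.trans h⟩

theorem not_LMR_of_forall_le {d : ℕ} {S : Measure (Ed d)} {A : Set (Ed d)} {f : Ed d → ℂ}
    (hf : IsCBS A f) {c : ℝ} (hc : 0 < c)
    (h : ∀ g, IsCBS Aᶜ g → c ≤ ∫ u, ‖FT f u - FT g u‖ ^ 2 ∂S) : ¬ LMR S A := fun hS =>
  have ⟨g, hg, hlt⟩ := hS f hf c hc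
  (h g hg).not_gt hlt

section Kernel

variable {d : ℕ} {A B K : Set (Ed d)} {f h k : Ed d → ℂ}

theorem integral_withDensity_norm_FT_sq (hk : Integrable k) (φ : Ed d → ℝ) :
    ∫ u, φ u ∂(volume.withDensity fun u => ENNReal.ofReal (‖FT k u‖ ^ 2)) =
      ∫ u, φ u * ‖FT k u‖ ^ 2 := by
  have hk_cont := continuous_FT hk
  rw [integral_withDensity_eq_integral_toReal_smul (by fun_prop)
    (.of_forall fun _ => ENNReal.ofReal_lt_top)]
  simp [mul_comm]

theorem IsCBS.memLp_two_convolution (hf : IsCBS A f) (hk : Integrable k) :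
    MemLp (k ⋆[mul ℂ ℂ] f) 2 :=
  have ⟨_, hC⟩ := hf.2.1
  memLp_two_convolution_of_bound _ hk hf.integrable hC

theorem IsCBS.disjoint_support_convolution (hf : IsCBS K f) (hh : IsCBS Aᶜ h)
    (hkB : support k ⊆ B) (hKA : K + (B - B) ⊆ A) :
    Disjoint (support (k ⋆[mul ℂ ℂ] f)) (support (k ⋆[mul ℂ ℂ] h)) :=
  (disjoint_add_compl_add_of_add_sub_subset hKA).mono
    ((support_convolution_subset _).trans (Set.add_subset_add hkB hf.2.2.2))
    ((support_convolution_subset _).trans (Set.add_subset_add hkB hh.2.2.2))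

theorem integral_FT_mul_conj_FT_mul_norm_FT_sq (hf : IsCBS K f) (hh : IsCBS A h)
    (hk : Integrable k) :
    ∫ u, FT f u * starRingEnd ℂ (FT h u) * (‖FT k u‖ ^ 2 : ℝ) =
      (2 * Real.pi) ^ d •
        ∫ x, (k ⋆[mul ℂ ℂ] f) x * starRingEnd ℂ ((k ⋆[mul ℂ ℂ] h) x) := by
  rw [← integral_FT_mul_conj_FT (hk.integrable_convolution _ hf.integrable)
    (hf.memLp_two_convolution hk) (hk.integrable_convolution _ hh.integrable)
    (hh.memLp_two_convolution hk)]
  simp_rw [FT_convolution hk hf.integrable, FT_convolution hk hh.integrable, map_mul,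
    ofReal_pow, ← mul_conj']
  refine integral_congr_ae (.of_forall fun u => ?_)
  ring

theorem integral_norm_FT_sq_mul_norm_FT_sq (hf : IsCBS K f) (hk : Integrable k) :
    ∫ u, ‖FT f u‖ ^ 2 * ‖FT k u‖ ^ 2 =
      (2 * Real.pi) ^ d * ∫ x, ‖(k ⋆[mul ℂ ℂ] f) x‖ ^ 2 := by
  rw [← integral_norm_FT_sq (hk.integrable_convolution _ hf.integrable)
    (hf.memLp_two_convolution hk)]
  simp_rw [FT_convolution hk hf.integrable, norm_mul, mul_pow, mul_comm]

theorem integral_norm_FT_sub_FT_sq_mul_norm_FT_sq (hf : IsCBS K f) (hh : IsCBS A h)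
    (hk : Integrable k) :
    ∫ u, ‖FT f u - FT h u‖ ^ 2 * ‖FT k u‖ ^ 2 =
      (2 * Real.pi) ^ d * ∫ x, ‖(k ⋆[mul ℂ ℂ] f) x - (k ⋆[mul ℂ ℂ] h) x‖ ^ 2 := by
  have hF := hk.integrable_convolution (mul ℂ ℂ) hf.integrable
  have hH := hk.integrable_convolution (mul ℂ ℂ) hh.integrable
  have h_plancherel := integral_norm_FT_sq (hF.sub hH)
    ((hf.memLp_two_convolution hk).sub (hh.memLp_two_convolution hk))
  simp_rw [Pi.sub_apply] at h_plancherel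
  rw [← h_plancherel]
  simp_rw [FT_sub hF hH, FT_convolution hk hf.integrable, FT_convolution hk hh.integrable,
    ← mul_sub, norm_mul, mul_pow, mul_comm]

theorem integral_FT_mul_conj_FT_mul_norm_FT_sq_eq_zero (hf : IsCBS K f) (hh : IsCBS Aᶜ h)
    (hk : Integrable k) (hkB : support k ⊆ B) (hKA : K + (B - B) ⊆ A) :
    ∫ u, FT f u * starRingEnd ℂ (FT h u) * (‖FT k u‖ ^ 2 : ℝ) = 0 := by
  have h_zero (x : Ed d) : (k ⋆[mul ℂ ℂ] f) x * starRingEnd ℂ ((k ⋆[mul ℂ ℂ] h) x) = 0 := by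
    by_contra hx
    have ⟨hfx, hhx⟩ := mul_ne_zero_iff.1 hx
    exact Set.disjoint_left.1 (hf.disjoint_support_convolution hh hkB hKA) hfx
      ((map_ne_zero _).1 hhx)
  rw [integral_FT_mul_conj_FT_mul_norm_FT_sq hf hh hk]
  simp [h_zero]

theorem integral_norm_FT_sq_mul_norm_FT_sq_le (hf : IsCBS K f) (hh : IsCBS Aᶜ h)
    (hk : Integrable k) (hkB : support k ⊆ B) (hKA : K + (B - B) ⊆ A) :
    ∫ u, ‖FT f u‖ ^ 2 * ‖FT k u‖ ^ 2 ≤ ∫ u, ‖FT f u - FT h u‖ ^ 2 * ‖FT k u‖ ^ 2 := by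
  rw [integral_norm_FT_sq_mul_norm_FT_sq hf hk,
    integral_norm_FT_sub_FT_sq_mul_norm_FT_sq hf hh hk]
  have hFH := (hf.memLp_two_convolution hk).sub (hh.memLp_two_convolution hk)
  refine mul_le_mul_of_nonneg_left (integral_mono_of_nonneg (.of_forall fun _ => sq_nonneg _)
    ((memLp_two_iff_integrable_sq_norm hFH.1).1 hFH) (.of_forall fun x => ?_)) (by positivity)
  exact pow_le_pow_left₀ (norm_nonneg _)
    (norm_le_norm_sub_of_disjoint_support (hf.disjoint_support_convolution hh hkB hKA) x) 2

theorem integral_norm_FT_sq_mul_norm_FT_sq_pos (hf : IsCBS K f) (hf₀ : ¬ f =ᵐ[volume] 0)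
    (hk : Integrable k) (hk₀ : ¬ k =ᵐ[volume] 0) :
    0 < ∫ u, ‖FT f u‖ ^ 2 * ‖FT k u‖ ^ 2 := by
  rw [integral_norm_FT_sq_mul_norm_FT_sq hf hk]
  refine mul_pos (by positivity) (integral_norm_sq_pos (hf.memLp_two_convolution hk) ?_)
  exact mt (ae_eq_zero_of_convolution_ae_eq_zero hf.integrable hf.2.2.1 hk hk₀) hf₀

theorem triangle_field_not_rigid_general (hk : Integrable k) (hk₀ : ¬ k =ᵐ[volume] 0)
    (hkB : support k ⊆ B) (hf : IsCBS K f) (hf₀ : ¬ f =ᵐ[volume] 0) (hKA : K + (B - B) ⊆ A) :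
    (∀ h, IsCBS Aᶜ h →
        ∫ u, FT f u * starRingEnd ℂ (FT h u) * (‖FT k u‖ ^ 2 : ℝ) = 0 ∧
        ∫ u, ‖FT f u‖ ^ 2 * ‖FT k u‖ ^ 2
          ≤ ∫ u, ‖FT f u - FT h u‖ ^ 2 * ‖FT k u‖ ^ 2) ∧
      0 < ∫ u, ‖FT f u‖ ^ 2 * ‖FT k u‖ ^ 2 ∧
      ¬ LMR (volume.withDensity fun u => ENNReal.ofReal (‖FT k u‖ ^ 2)) A := by
  have h_le (h) (hh : IsCBS Aᶜ h) := integral_norm_FT_sq_mul_norm_FT_sq_le hf hh hk hkB hKA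
  have h_pos := integral_norm_FT_sq_mul_norm_FT_sq_pos hf hf₀ hk hk₀
  have hB : B.Nonempty := (support_nonempty_iff.2 fun hk_zero => hk₀ (by rw [hk_zero])).mono hkB
  have hK_sub : K ⊆ A := (Set.subset_add_left K hB.zero_mem_sub).trans hKA
  refine ⟨fun h hh => ⟨integral_FT_mul_conj_FT_mul_norm_FT_sq_eq_zero hf hh hk hkB hKA,
    h_le h hh⟩, h_pos, not_LMR_of_forall_le (hf.mono hK_sub) h_pos fun g hg => ?_⟩
  rw [integral_withDensity_norm_FT_sq hk]
  exact h_le g hg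

end Kernel

section Ball

variable {d : ℕ}

/-- The indicator function of the closed unit ball, whose Fourier transform is `J_d`. -/
def unitBallIndicator (d : ℕ) : Ed d → ℂ :=
  (Metric.closedBall 0 1).indicator 1

theorem integrable_unitBallIndicator : Integrable (unitBallIndicator d) :=
  (integrable_indicator_iff measurableSet_closedBall).2 <|
    integrableOn_const measure_closedBall_lt_top.ne

theorem support_unitBallIndicator : support (unitBallIndicator d) = Metric.closedBall 0 1 := by
  simp [unitBallIndicator, Set.support_indicator]

theorem not_unitBallIndicator_ae_eq_zero : ¬ unitBallIndicator d =ᵐ[volume] 0 := by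
  have h_support : {x | unitBallIndicator d x ≠ 0} = Metric.closedBall 0 1 :=
    support_unitBallIndicator
  rw [Filter.EventuallyEq, ae_iff, Pi.zero_def, h_support]
  exact (Metric.measure_closedBall_pos volume 0 one_pos).ne'

theorem conj_unitBallIndicator_neg (x : Ed d) :
    starRingEnd ℂ (unitBallIndicator d (-x)) = unitBallIndicator d x := by
  by_cases hx : ‖x‖ ≤ 1 <;> simp [unitBallIndicator, hx]

theorem re_FT_unitBallIndicator (u : Ed d) : (FT (unitBallIndicator d) u).re = Jd d u := by
  rw [Jd, FT, ← integral_indicator measurableSet_closedBall]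
  simp [unitBallIndicator, Set.indicator]

theorem FT_unitBallIndicator (u : Ed d) : FT (unitBallIndicator d) u = Jd d u := by
  rw [← re_FT_unitBallIndicator, eq_comm, ← conj_eq_iff_re, conj_FT]
  simp_rw [conj_unitBallIndicator_neg]

theorem norm_FT_unitBallIndicator_sq (u : Ed d) :
    ‖FT (unitBallIndicator d) u‖ ^ 2 = Jd d u ^ 2 := by
  rw [FT_unitBallIndicator, norm_real, Real.norm_eq_abs, sq_abs]

end Ball

/-- Theorem 7 (non-rigidity part): for `ρ > 2`, any bounded measurable `f` supported in
`B(0,ρ-2)` which is not a.e. zero is orthogonal (in `L²(J_d²·Leb)`) to every bounded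
measurable compactly supported `h` supported outside `B(0,ρ)`; hence the approximation
error is bounded below by `∫ |f̂|² J_d² > 0`, and the measure `J_d²·Leb` does not induce
linear maximal rigidity on `B(0,ρ)`. -/
theorem triangle_field_not_rigid {d : ℕ} (hd : 1 ≤ d) (ρ : ℝ) (hρ : 2 < ρ)
    (f : Ed d → ℂ) (hf_meas : Measurable f) (hf_bdd : ∃ C : ℝ, ∀ x, ‖f x‖ ≤ C)
    (hf_supp : Function.support f ⊆ Metric.closedBall (0 : Ed d) (ρ - 2))
    (hf_ne : ¬ f =ᵐ[volume] 0) :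
    (∀ h : Ed d → ℂ, IsCBS (Metric.closedBall (0 : Ed d) ρ)ᶜ h →
        (∫ u, FT f u * (starRingEnd ℂ) (FT h u) * ((Jd d u : ℝ) : ℂ) ^ 2 ∂volume) = 0 ∧
        (∫ u, ‖FT f u‖ ^ 2 * Jd d u ^ 2 ∂volume)
          ≤ ∫ u, ‖FT f u - FT h u‖ ^ 2 * Jd d u ^ 2 ∂volume) ∧
      (0 < ∫ u, ‖FT f u‖ ^ 2 * Jd d u ^ 2 ∂volume) ∧
      ¬ LMR (volume.withDensity fun u => ENNReal.ofReal (Jd d u ^ 2))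
          (Metric.closedBall (0 : Ed d) ρ) := by
  have hKA : Metric.closedBall (0 : Ed d) (ρ - 2) +
      (Metric.closedBall 0 1 - Metric.closedBall 0 1) ⊆ Metric.closedBall 0 ρ := by
    rw [closedBall_sub_closedBall zero_le_one zero_le_one,
      closedBall_add_closedBall (by linarith) (by norm_num)]
    exact Metric.closedBall_subset_closedBall' (by norm_num)
  have hf : IsCBS (Metric.closedBall 0 (ρ - 2)) f :=
    ⟨hf_meas, hf_bdd, Metric.isBounded_closedBall.subset hf_supp, hf_supp⟩
  simpa only [norm_FT_unitBallIndicator_sq, ofReal_pow] using triangle_field_not_rigid_general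
    integrable_unitBallIndicator not_unitBallIndicator_ae_eq_zero
    support_unitBallIndicator.subset hf hf_ne hKA
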